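/- Residuated soundness: (1) if Σ;Δ ⟶ G ↘ C is derivable in the residuated system, then Σ;Δ;{C} ⟶ G is derivable in the uniform system; (2) if Σ;Δ;∇ ⟶ G is derivable in the uniform system and Σ;Δ ⟶ [D] ⇒ A ↘ G is derivable in the residuated system, then Σ;Δ;∇ ⟶ [D] ⇒ A is derivable in the focused system. -/

import Mathlib

/-!
Residuated soundness. A residuated derivation is a uniform derivation in which the
constraint is collected rather than checked, so each part is an induction on the
residuated derivation.

For focused sequents (`Resid.rf_sound`), the residual goal `G` of `[D] ⇒ A` has the shape
of `D`: `G ∧ G'` for an implication, `∃X` for `∀X`, `И` for `И`. Inverting the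
uniform derivation of `G` provides the premises of the matching left rule. The base case
has the residual `A ∼ A'` where the focused rule asks for `A' ∼ A`, so it needs symmetry of
`∼` (`Resid.atomSim_symm`), which rests on equivariance and symmetry of `≈`.

For goals (`Resid.rg_sound`), the witness in the quantifier rules is the residual constraint
of the body. Conjunctions and quantifiers then need a derivation over `{C}` to be moved
to a stronger constraint set; `Resid.ud_mono` does this, since constraints enter the uniform
system only through semantic entailment. Backchaining combines the two parts.
-/

/-!  Nominal logic programming: common infrastructure. -/

noncomputable section
open scoped Classical
set_option linter.unusedVariables false
set_option linter.unreachableTactic false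
set_option linter.unusedTactic false

/-- Sorts of a nominal signature: name sorts `ν`, data sorts `δ`,
and abstraction sorts `⟨ν⟩σ`. -/
inductive NomSort (N D : Type) : Type
  | name : N → NomSort N D
  | data : D → NomSort N D
  | nabs : N → NomSort N D → NomSort N D

/-- A nominal (many-sorted, first-order) signature. -/
structure NomSig : Type 1 where
  NSort : Type
  DSort : Type
  Func : Type
  Rel : Type
  fArgs : Func → List (NomSort NSort DSort)
  fRes : Func → DSort
  rArgs : Rel → List (NomSort NSort DSort)

/-- Names: countably infinitely many for each name sort. -/
abbrev NomSig.Name (L : NomSig) : Type := L.NSort × ℕ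

variable {L : NomSig}

/-- The transposition (a b) acting on names. -/
def swapName (a b c : L.Name) : L.Name :=
  if c = a then b else if c = b then a else c

/-- Nominal terms (possibly containing variables). -/
inductive Tm (L : NomSig) : Type
  | var : ℕ → Tm L
  | name : L.Name → Tm L
  | app : L.Func → List (Tm L) → Tm L
  | abs : L.Name → Tm L → Tm L

namespace Tm

/-- Apply a renaming of names to every name occurrence (including binding ones). -/
def rename (f : L.Name → L.Name) : Tm L → Tm L
  | var X => var X
  | name c => name (f c)
  | app g ts => app g (ts.attach.map fun x => rename f x.1)
  | abs c t => abs (f c) (rename f t)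
decreasing_by
  all_goals simp_wf
  all_goals first
    | (have := List.sizeOf_lt_of_mem x.2; omega)
    | omega

/-- The swapping `(a b)·t`. -/
def swap (a b : L.Name) (t : Tm L) : Tm L := t.rename (swapName a b)

/-- Apply a substitution of terms for variables. -/
def subst (θ : ℕ → Tm L) : Tm L → Tm L
  | var X => θ X
  | name c => name c
  | app g ts => app g (ts.attach.map fun x => subst θ x.1)
  | abs c t => abs c (subst θ t)
decreasing_by
  all_goals simp_wf
  all_goals first
    | (have := List.sizeOf_lt_of_mem x.2; omega)
    | omega

/-- Syntactic free-name occurrence (a name occurring outside the scope of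
an abstraction of the same name). -/
inductive FNa : L.Name → Tm L → Prop
  | name (a : L.Name) : FNa a (name a)
  | app (a : L.Name) (f : L.Func) (ts : List (Tm L)) (t : Tm L) :
      t ∈ ts → FNa a t → FNa a (app f ts)
  | abs (a b : L.Name) (t : Tm L) : a ≠ b → FNa a t → FNa a (abs b t)

/-- Free variable occurrence in a term. -/
inductive FVa : ℕ → Tm L → Prop
  | var (X : ℕ) : FVa X (var X)
  | app (X : ℕ) (f : L.Func) (ts : List (Tm L)) (t : Tm L) :
      t ∈ ts → FVa X t → FVa X (app f ts)
  | abs (X : ℕ) (b : L.Name) (t : Tm L) : FVa X t → FVa X (abs b t)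

end Tm

/-- The substitution `[t/X]`. -/
def substSingle (X : ℕ) (t : Tm L) : ℕ → Tm L := fun Y => if Y = X then t else Tm.var Y

/-- `IsTm t σ`: `t` is a well-sorted ground term of sort `σ`. -/
inductive IsTm : Tm L → NomSort L.NSort L.DSort → Prop
  | name (a : L.Name) : IsTm (Tm.name a) (NomSort.name a.1)
  | app (f : L.Func) (ts : List (Tm L)) :
      ts.length = (L.fArgs f).length →
      (∀ p ∈ ts.zip (L.fArgs f), IsTm p.1 p.2) →
      IsTm (Tm.app f ts) (NomSort.data (L.fRes f))
  | abs (a : L.Name) (t : Tm L) (σ : NomSort L.NSort L.DSort) :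
      IsTm t σ → IsTm (Tm.abs a t) (NomSort.nabs a.1 σ)

/-- Well-sortedness of a (possibly open) term relative to a sort
assignment `vs` for variables. -/
inductive TmS (vs : ℕ → NomSort L.NSort L.DSort) : Tm L → NomSort L.NSort L.DSort → Prop
  | var (X : ℕ) : TmS vs (Tm.var X) (vs X)
  | name (a : L.Name) : TmS vs (Tm.name a) (NomSort.name a.1)
  | app (f : L.Func) (ts : List (Tm L)) :
      ts.length = (L.fArgs f).length →
      (∀ p ∈ ts.zip (L.fArgs f), TmS vs p.1 p.2) →
      TmS vs (Tm.app f ts) (NomSort.data (L.fRes f))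
  | abs (a : L.Name) (t : Tm L) (σ : NomSort L.NSort L.DSort) :
      TmS vs t σ → TmS vs (Tm.abs a t) (NomSort.nabs a.1 σ)

/-- Freshness `a # t` on ground terms. -/
inductive Fresh : L.Name → Tm L → Prop
  | name (a b : L.Name) : a ≠ b → Fresh a (Tm.name b)
  | app (a : L.Name) (f : L.Func) (ts : List (Tm L)) :
      (∀ t ∈ ts, Fresh a t) → Fresh a (Tm.app f ts)
  | absSame (a : L.Name) (t : Tm L) : Fresh a (Tm.abs a t)
  | absDiff (a b : L.Name) (t : Tm L) : a ≠ b → Fresh a t → Fresh a (Tm.abs b t)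

/-- Alpha-equivalence `t ≈ u` on ground terms. -/
inductive Aeq : Tm L → Tm L → Prop
  | name (a : L.Name) : Aeq (Tm.name a) (Tm.name a)
  | app (f : L.Func) (ts us : List (Tm L)) :
      ts.length = us.length → (∀ p ∈ ts.zip us, Aeq p.1 p.2) →
      Aeq (Tm.app f ts) (Tm.app f us)
  | absSame (a : L.Name) (t u : Tm L) : Aeq t u → Aeq (Tm.abs a t) (Tm.abs a u)
  | absDiff (a b : L.Name) (t u : Tm L) :
      Fresh a u → Aeq t (Tm.swap a b u) → Aeq (Tm.abs a t) (Tm.abs b u)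

/-- The support of a ground term: the set of names not fresh for it. -/
def suppTm (t : Tm L) : Set L.Name := {a | ¬ Fresh a t}

/-- Finite sort-preserving bijections (permutations) of names. -/
def IsPerm (π : L.Name → L.Name) : Prop :=
  Function.Bijective π ∧ (∀ a, (π a).1 = a.1) ∧ {a | π a ≠ a}.Finite

/-- `t ∼ u`: equal up to a permutation of names. -/
def SimTm (t u : Tm L) : Prop := ∃ π, IsPerm π ∧ Aeq (t.rename π) u

/-- Atomic formulas `p(t₁,…,tₙ)`. -/
structure NAtom (L : NomSig) : Type where
  rel : L.Rel
  args : List (Tm L)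

def NAtom.rename (f : L.Name → L.Name) (A : NAtom L) : NAtom L :=
  ⟨A.rel, A.args.map (Tm.rename f)⟩

def NAtom.swap (a b : L.Name) (A : NAtom L) : NAtom L := A.rename (swapName a b)

def NAtom.subst (θ : ℕ → Tm L) (A : NAtom L) : NAtom L :=
  ⟨A.rel, A.args.map (Tm.subst θ)⟩

def NAtom.FNa (a : L.Name) (A : NAtom L) : Prop := ∃ t ∈ A.args, Tm.FNa a t
def NAtom.FVa (X : ℕ) (A : NAtom L) : Prop := ∃ t ∈ A.args, Tm.FVa X t

/-- Alpha-equivalence of atoms. -/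
def AtomAeq (A B : NAtom L) : Prop :=
  A.rel = B.rel ∧ A.args.length = B.args.length ∧ ∀ p ∈ A.args.zip B.args, Aeq p.1 p.2

/-- `A ∼ B` for atoms: equal up to a permutation of names. -/
def AtomSim (A B : NAtom L) : Prop := ∃ π, IsPerm π ∧ AtomAeq (A.rename π) B

/-- Well-sortedness of an atom relative to a variable sort assignment. -/
def AtomS (vs : ℕ → NomSort L.NSort L.DSort) (A : NAtom L) : Prop :=
  A.args.length = (L.rArgs A.rel).length ∧ ∀ p ∈ A.args.zip (L.rArgs A.rel), TmS vs p.1 p.2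

/-- The Herbrand base: all well-sorted ground atoms. -/
def BL (L : NomSig) : Set (NAtom L) :=
  {A | A.args.length = (L.rArgs A.rel).length ∧ ∀ p ∈ A.args.zip (L.rArgs A.rel), IsTm p.1 p.2}

/-- An equivariant set of atoms: closed under all same-sorted swappings. -/
def EquivariantSet (S : Set (NAtom L)) : Prop :=
  ∀ a b : L.Name, a.1 = b.1 → NAtom.swap a b '' S = S


/-! ### Constraints -/

/-- Constraints `C`. -/
inductive NCon (L : NomSig) : Type
  | tt : NCon L
  | eq (t u : Tm L) : NCon L
  | fr (a : L.Name) (t : Tm L) : NCon L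
  | sim (t u : Tm L) : NCon L
  | simA (A B : NAtom L) : NCon L
  | aeqA (A B : NAtom L) : NCon L
  | and (C C' : NCon L) : NCon L
  | ex (X : ℕ) (σ : NomSort L.NSort L.DSort) (C : NCon L) : NCon L
  | nu (a : L.Name) (C : NCon L) : NCon L

namespace NCon

def rename (f : L.Name → L.Name) : NCon L → NCon L
  | tt => tt
  | eq t u => eq (t.rename f) (u.rename f)
  | fr a t => fr (f a) (t.rename f)
  | sim t u => sim (t.rename f) (u.rename f)
  | simA A B => simA (A.rename f) (B.rename f)
  | aeqA A B => aeqA (A.rename f) (B.rename f)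
  | and C C' => and (rename f C) (rename f C')
  | ex X σ C => ex X σ (rename f C)
  | nu a C => nu (f a) (rename f C)

/-- Swapping `(a b)·C`, acting on all names (bound names included). -/
def swap (a b : L.Name) (C : NCon L) : NCon L := C.rename (swapName a b)

def subst (θ : ℕ → Tm L) : NCon L → NCon L
  | tt => tt
  | eq t u => eq (t.subst θ) (u.subst θ)
  | fr a t => fr a (t.subst θ)
  | sim t u => sim (t.subst θ) (u.subst θ)
  | simA A B => simA (A.subst θ) (B.subst θ)
  | aeqA A B => aeqA (A.subst θ) (B.subst θ)
  | and C C' => and (subst θ C) (subst θ C')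
  | ex X σ C => ex X σ (subst (Function.update θ X (Tm.var X)) C)
  | nu a C => nu a (subst θ C)

def size : NCon L → ℕ
  | and C C' => size C + size C' + 1
  | ex _ _ C => size C + 1
  | nu _ C => size C + 1
  | _ => 1

@[simp] theorem size_rename (f : L.Name → L.Name) :
    ∀ C : NCon L, (C.rename f).size = C.size := by
  intro C; induction C <;> simp [rename, size, *]

@[simp] theorem size_swap (a b : L.Name) (C : NCon L) : (C.swap a b).size = C.size :=
  size_rename _ C

@[simp] theorem size_subst :
    ∀ (C : NCon L) (θ : ℕ → Tm L), (C.subst θ).size = C.size := by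
  intro C; induction C <;> intro θ <;> simp [subst, size, *]

/-- Free names of a constraint. -/
inductive FNa : L.Name → NCon L → Prop
  | eq₁ (a : L.Name) (t u : Tm L) : Tm.FNa a t → FNa a (eq t u)
  | eq₂ (a : L.Name) (t u : Tm L) : Tm.FNa a u → FNa a (eq t u)
  | frN (a : L.Name) (t : Tm L) : FNa a (fr a t)
  | frT (a c : L.Name) (t : Tm L) : Tm.FNa a t → FNa a (fr c t)
  | sim₁ (a : L.Name) (t u : Tm L) : Tm.FNa a t → FNa a (sim t u)
  | sim₂ (a : L.Name) (t u : Tm L) : Tm.FNa a u → FNa a (sim t u)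
  | simA₁ (a : L.Name) (A B : NAtom L) : NAtom.FNa a A → FNa a (simA A B)
  | simA₂ (a : L.Name) (A B : NAtom L) : NAtom.FNa a B → FNa a (simA A B)
  | aeqA₁ (a : L.Name) (A B : NAtom L) : NAtom.FNa a A → FNa a (aeqA A B)
  | aeqA₂ (a : L.Name) (A B : NAtom L) : NAtom.FNa a B → FNa a (aeqA A B)
  | and₁ (a : L.Name) (C C' : NCon L) : FNa a C → FNa a (and C C')
  | and₂ (a : L.Name) (C C' : NCon L) : FNa a C' → FNa a (and C C')
  | ex (a : L.Name) (X : ℕ) (σ : NomSort L.NSort L.DSort) (C : NCon L) :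
      FNa a C → FNa a (ex X σ C)
  | nu (a c : L.Name) (C : NCon L) : a ≠ c → FNa a C → FNa a (nu c C)

/-- Free variables of a constraint. -/
inductive FVa : ℕ → NCon L → Prop
  | eq₁ (X : ℕ) (t u : Tm L) : Tm.FVa X t → FVa X (eq t u)
  | eq₂ (X : ℕ) (t u : Tm L) : Tm.FVa X u → FVa X (eq t u)
  | frT (X : ℕ) (c : L.Name) (t : Tm L) : Tm.FVa X t → FVa X (fr c t)
  | sim₁ (X : ℕ) (t u : Tm L) : Tm.FVa X t → FVa X (sim t u)
  | sim₂ (X : ℕ) (t u : Tm L) : Tm.FVa X u → FVa X (sim t u)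
  | simA₁ (X : ℕ) (A B : NAtom L) : NAtom.FVa X A → FVa X (simA A B)
  | simA₂ (X : ℕ) (A B : NAtom L) : NAtom.FVa X B → FVa X (simA A B)
  | aeqA₁ (X : ℕ) (A B : NAtom L) : NAtom.FVa X A → FVa X (aeqA A B)
  | aeqA₂ (X : ℕ) (A B : NAtom L) : NAtom.FVa X B → FVa X (aeqA A B)
  | and₁ (X : ℕ) (C C' : NCon L) : FVa X C → FVa X (and C C')
  | and₂ (X : ℕ) (C C' : NCon L) : FVa X C' → FVa X (and C C')
  | ex (X X' : ℕ) (σ : NomSort L.NSort L.DSort) (C : NCon L) :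
      X ≠ X' → FVa X C → FVa X (ex X' σ C)
  | nu (X : ℕ) (c : L.Name) (C : NCon L) : FVa X C → FVa X (nu c C)

/-- Well-sortedness of a constraint relative to a variable sort assignment. -/
def WS (vs : ℕ → NomSort L.NSort L.DSort) : NCon L → Prop
  | tt => True
  | eq t u => ∃ σ, TmS vs t σ ∧ TmS vs u σ
  | fr _ t => ∃ σ, TmS vs t σ
  | sim t u => ∃ σ, TmS vs t σ ∧ TmS vs u σ
  | simA A B => AtomS vs A ∧ AtomS vs B
  | aeqA A B => AtomS vs A ∧ AtomS vs B
  | and C C' => WS vs C ∧ WS vs C'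
  | ex X σ C => WS (Function.update vs X σ) C
  | nu _ C => WS vs C

end NCon

/-- Satisfaction `⊨ C` of a (closed) constraint. -/
def ConSat : NCon L → Prop
  | NCon.tt => True
  | NCon.eq t u => Aeq t u
  | NCon.fr a t => Fresh a t
  | NCon.sim t u => SimTm t u
  | NCon.simA A B => AtomSim A B
  | NCon.aeqA A B => AtomAeq A B
  | NCon.and C C' => ConSat C ∧ ConSat C'
  | NCon.ex X σ C => ∃ t : Tm L, IsTm t σ ∧ ConSat (C.subst (substSingle X t))
  | NCon.nu a C => ∀ b : L.Name, b.1 = a.1 → ¬ NCon.FNa b (NCon.nu a C) → ConSat (C.swap b a)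
termination_by C => C.size
decreasing_by all_goals (simp [NCon.size]; try omega)
/-! ### Goals -/

/-- Goal formulas `G`. -/
inductive NGoal (L : NomSig) : Type
  | tt : NGoal L
  | atom (A : NAtom L) : NGoal L
  | con (C : NCon L) : NGoal L
  | and (G G' : NGoal L) : NGoal L
  | or (G G' : NGoal L) : NGoal L
  | ex (X : ℕ) (σ : NomSort L.NSort L.DSort) (G : NGoal L) : NGoal L
  | nu (a : L.Name) (G : NGoal L) : NGoal L

namespace NGoal

def rename (f : L.Name → L.Name) : NGoal L → NGoal L
  | tt => tt
  | atom A => atom (A.rename f)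
  | con C => con (C.rename f)
  | and G G' => and (rename f G) (rename f G')
  | or G G' => or (rename f G) (rename f G')
  | ex X σ G => ex X σ (rename f G)
  | nu a G => nu (f a) (rename f G)

def swap (a b : L.Name) (G : NGoal L) : NGoal L := G.rename (swapName a b)

def subst (θ : ℕ → Tm L) : NGoal L → NGoal L
  | tt => tt
  | atom A => atom (A.subst θ)
  | con C => con (C.subst θ)
  | and G G' => and (subst θ G) (subst θ G')
  | or G G' => or (subst θ G) (subst θ G')
  | ex X σ G => ex X σ (subst (Function.update θ X (Tm.var X)) G)
  | nu a G => nu a (subst θ G)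

def size : NGoal L → ℕ
  | and G G' => size G + size G' + 1
  | or G G' => size G + size G' + 1
  | ex _ _ G => size G + 1
  | nu _ G => size G + 1
  | _ => 1

@[simp] theorem size_rename (f : L.Name → L.Name) :
    ∀ G : NGoal L, (G.rename f).size = G.size := by
  intro G; induction G <;> simp [rename, size, *]

@[simp] theorem size_swap (a b : L.Name) (G : NGoal L) : (G.swap a b).size = G.size :=
  size_rename _ G

@[simp] theorem size_subst :
    ∀ (G : NGoal L) (θ : ℕ → Tm L), (G.subst θ).size = G.size := by
  intro G; induction G <;> intro θ <;> simp [subst, size, *]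

/-- Free names of a goal. -/
inductive FNa : L.Name → NGoal L → Prop
  | atom (a : L.Name) (A : NAtom L) : NAtom.FNa a A → FNa a (atom A)
  | con (a : L.Name) (C : NCon L) : NCon.FNa a C → FNa a (con C)
  | and₁ (a : L.Name) (G G' : NGoal L) : FNa a G → FNa a (and G G')
  | and₂ (a : L.Name) (G G' : NGoal L) : FNa a G' → FNa a (and G G')
  | or₁ (a : L.Name) (G G' : NGoal L) : FNa a G → FNa a (or G G')
  | or₂ (a : L.Name) (G G' : NGoal L) : FNa a G' → FNa a (or G G')
  | ex (a : L.Name) (X : ℕ) (σ : NomSort L.NSort L.DSort) (G : NGoal L) :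
      FNa a G → FNa a (ex X σ G)
  | nu (a c : L.Name) (G : NGoal L) : a ≠ c → FNa a G → FNa a (nu c G)

/-- Free variables of a goal. -/
inductive FVa : ℕ → NGoal L → Prop
  | atom (X : ℕ) (A : NAtom L) : NAtom.FVa X A → FVa X (atom A)
  | con (X : ℕ) (C : NCon L) : NCon.FVa X C → FVa X (con C)
  | and₁ (X : ℕ) (G G' : NGoal L) : FVa X G → FVa X (and G G')
  | and₂ (X : ℕ) (G G' : NGoal L) : FVa X G' → FVa X (and G G')
  | or₁ (X : ℕ) (G G' : NGoal L) : FVa X G → FVa X (or G G')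
  | or₂ (X : ℕ) (G G' : NGoal L) : FVa X G' → FVa X (or G G')
  | ex (X X' : ℕ) (σ : NomSort L.NSort L.DSort) (G : NGoal L) :
      X ≠ X' → FVa X G → FVa X (ex X' σ G)
  | nu (X : ℕ) (c : L.Name) (G : NGoal L) : FVa X G → FVa X (nu c G)

/-- Well-sortedness of a goal relative to a variable sort assignment. -/
def WS (vs : ℕ → NomSort L.NSort L.DSort) : NGoal L → Prop
  | tt => True
  | atom A => AtomS vs A
  | con C => NCon.WS vs C
  | and G G' => WS vs G ∧ WS vs G'
  | or G G' => WS vs G ∧ WS vs G'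
  | ex X σ G => WS (Function.update vs X σ) G
  | nu _ G => WS vs G

end NGoal

/-- Satisfaction `S ⊨ G` of a (closed) goal by a Herbrand interpretation. -/
def GoalSat (S : Set (NAtom L)) : NGoal L → Prop
  | NGoal.tt => True
  | NGoal.atom A => A ∈ S
  | NGoal.con C => ConSat C
  | NGoal.and G G' => GoalSat S G ∧ GoalSat S G'
  | NGoal.or G G' => GoalSat S G ∨ GoalSat S G'
  | NGoal.ex X σ G => ∃ t : Tm L, IsTm t σ ∧ GoalSat S (G.subst (substSingle X t))
  | NGoal.nu a G => ∀ b : L.Name, b.1 = a.1 → ¬ NGoal.FNa b (NGoal.nu a G) →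
      GoalSat S (G.swap b a)
termination_by G => G.size
decreasing_by all_goals (simp [NGoal.size]; try omega)

/-! ### Program clauses -/

/-- Program clauses `D`. -/
inductive NCl (L : NomSig) : Type
  | tt : NCl L
  | atom (A : NAtom L) : NCl L
  | and (D D' : NCl L) : NCl L
  | imp (G : NGoal L) (D : NCl L) : NCl L
  | all (X : ℕ) (σ : NomSort L.NSort L.DSort) (D : NCl L) : NCl L
  | nu (a : L.Name) (D : NCl L) : NCl L

namespace NCl

def rename (f : L.Name → L.Name) : NCl L → NCl L
  | tt => tt
  | atom A => atom (A.rename f)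
  | and D D' => and (rename f D) (rename f D')
  | imp G D => imp (G.rename f) (rename f D)
  | all X σ D => all X σ (rename f D)
  | nu a D => nu (f a) (rename f D)

def swap (a b : L.Name) (D : NCl L) : NCl L := D.rename (swapName a b)

def subst (θ : ℕ → Tm L) : NCl L → NCl L
  | tt => tt
  | atom A => atom (A.subst θ)
  | and D D' => and (subst θ D) (subst θ D')
  | imp G D => imp (G.subst θ) (subst θ D)
  | all X σ D => all X σ (subst (Function.update θ X (Tm.var X)) D)
  | nu a D => nu a (subst θ D)

def size : NCl L → ℕ
  | and D D' => size D + size D' + 1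
  | imp _ D => size D + 1
  | all _ _ D => size D + 1
  | nu _ D => size D + 1
  | _ => 1

@[simp] theorem size_rename (f : L.Name → L.Name) :
    ∀ D : NCl L, (D.rename f).size = D.size := by
  intro D; induction D <;> simp [rename, size, *]

@[simp] theorem size_swap (a b : L.Name) (D : NCl L) : (D.swap a b).size = D.size :=
  size_rename _ D

@[simp] theorem size_subst :
    ∀ (D : NCl L) (θ : ℕ → Tm L), (D.subst θ).size = D.size := by
  intro D; induction D <;> intro θ <;> simp [subst, size, *]

/-- Free names of a program clause. -/
inductive FNa : L.Name → NCl L → Prop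
  | atom (a : L.Name) (A : NAtom L) : NAtom.FNa a A → FNa a (atom A)
  | and₁ (a : L.Name) (D D' : NCl L) : FNa a D → FNa a (and D D')
  | and₂ (a : L.Name) (D D' : NCl L) : FNa a D' → FNa a (and D D')
  | imp₁ (a : L.Name) (G : NGoal L) (D : NCl L) : NGoal.FNa a G → FNa a (imp G D)
  | imp₂ (a : L.Name) (G : NGoal L) (D : NCl L) : FNa a D → FNa a (imp G D)
  | all (a : L.Name) (X : ℕ) (σ : NomSort L.NSort L.DSort) (D : NCl L) :
      FNa a D → FNa a (all X σ D)
  | nu (a c : L.Name) (D : NCl L) : a ≠ c → FNa a D → FNa a (nu c D)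

/-- Free variables of a program clause. -/
inductive FVa : ℕ → NCl L → Prop
  | atom (X : ℕ) (A : NAtom L) : NAtom.FVa X A → FVa X (atom A)
  | and₁ (X : ℕ) (D D' : NCl L) : FVa X D → FVa X (and D D')
  | and₂ (X : ℕ) (D D' : NCl L) : FVa X D' → FVa X (and D D')
  | imp₁ (X : ℕ) (G : NGoal L) (D : NCl L) : NGoal.FVa X G → FVa X (imp G D)
  | imp₂ (X : ℕ) (G : NGoal L) (D : NCl L) : FVa X D → FVa X (imp G D)
  | all (X X' : ℕ) (σ : NomSort L.NSort L.DSort) (D : NCl L) :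
      X ≠ X' → FVa X D → FVa X (all X' σ D)
  | nu (X : ℕ) (c : L.Name) (D : NCl L) : FVa X D → FVa X (nu c D)

/-- Well-sortedness of a program clause relative to a variable sort assignment. -/
def WS (vs : ℕ → NomSort L.NSort L.DSort) : NCl L → Prop
  | tt => True
  | atom A => AtomS vs A
  | and D D' => WS vs D ∧ WS vs D'
  | imp G D => NGoal.WS vs G ∧ WS vs D
  | all X σ D => WS (Function.update vs X σ) D
  | nu _ D => WS vs D

/-- A clause with no free variables. -/
def ClosedV (D : NCl L) : Prop := ∀ X : ℕ, ¬ FVa X D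

/-- A clause with no free names. -/
def ClosedN (D : NCl L) : Prop := ∀ a : L.Name, ¬ FNa a D

/-- И-goal clauses: no И-quantified clause subformulas (goals may contain И). -/
inductive NuGoal : NCl L → Prop
  | tt : NuGoal tt
  | atom (A : NAtom L) : NuGoal (atom A)
  | and (D D' : NCl L) : NuGoal D → NuGoal D' → NuGoal (and D D')
  | imp (G : NGoal L) (D : NCl L) : NuGoal D → NuGoal (imp G D)
  | all (X : ℕ) (σ : NomSort L.NSort L.DSort) (D : NCl L) : NuGoal D → NuGoal (all X σ D)

end NCl

/-- Satisfaction `S ⊨ D` of a (closed) program clause. -/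
def ClSat (S : Set (NAtom L)) : NCl L → Prop
  | NCl.tt => True
  | NCl.atom A => A ∈ S
  | NCl.and D D' => ClSat S D ∧ ClSat S D'
  | NCl.imp G D => GoalSat S G → ClSat S D
  | NCl.all X σ D => ∀ t : Tm L, IsTm t σ → ClSat S (D.subst (substSingle X t))
  | NCl.nu a D => ∀ b : L.Name, b.1 = a.1 → ¬ NCl.FNa b (NCl.nu a D) →
      ClSat S (D.swap b a)
termination_by D => D.size
decreasing_by all_goals (simp [NCl.size]; try omega)
/-! ### General first-order nominal formulas -/

/-- Formulas of nominal logic. -/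
inductive NFm (L : NomSig) : Type
  | tt : NFm L
  | ff : NFm L
  | atom (A : NAtom L) : NFm L
  | eq (t u : Tm L) : NFm L
  | fr (a : L.Name) (t : Tm L) : NFm L
  | sim (t u : Tm L) : NFm L
  | imp (φ ψ : NFm L) : NFm L
  | and (φ ψ : NFm L) : NFm L
  | or (φ ψ : NFm L) : NFm L
  | all (X : ℕ) (σ : NomSort L.NSort L.DSort) (φ : NFm L) : NFm L
  | ex (X : ℕ) (σ : NomSort L.NSort L.DSort) (φ : NFm L) : NFm L
  | nu (a : L.Name) (φ : NFm L) : NFm L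

namespace NFm

def rename (f : L.Name → L.Name) : NFm L → NFm L
  | tt => tt
  | ff => ff
  | atom A => atom (A.rename f)
  | eq t u => eq (t.rename f) (u.rename f)
  | fr a t => fr (f a) (t.rename f)
  | sim t u => sim (t.rename f) (u.rename f)
  | imp φ ψ => imp (rename f φ) (rename f ψ)
  | and φ ψ => and (rename f φ) (rename f ψ)
  | or φ ψ => or (rename f φ) (rename f ψ)
  | all X σ φ => all X σ (rename f φ)
  | ex X σ φ => ex X σ (rename f φ)
  | nu a φ => nu (f a) (rename f φ)

/-- Swapping `(a b)·φ`. -/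
def swap (a b : L.Name) (φ : NFm L) : NFm L := φ.rename (swapName a b)

def subst (θ : ℕ → Tm L) : NFm L → NFm L
  | tt => tt
  | ff => ff
  | atom A => atom (A.subst θ)
  | eq t u => eq (t.subst θ) (u.subst θ)
  | fr a t => fr a (t.subst θ)
  | sim t u => sim (t.subst θ) (u.subst θ)
  | imp φ ψ => imp (subst θ φ) (subst θ ψ)
  | and φ ψ => and (subst θ φ) (subst θ ψ)
  | or φ ψ => or (subst θ φ) (subst θ ψ)
  | all X σ φ => all X σ (subst (Function.update θ X (Tm.var X)) φ)
  | ex X σ φ => ex X σ (subst (Function.update θ X (Tm.var X)) φ)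
  | nu a φ => nu a (subst θ φ)

def size : NFm L → ℕ
  | imp φ ψ => size φ + size ψ + 1
  | and φ ψ => size φ + size ψ + 1
  | or φ ψ => size φ + size ψ + 1
  | all _ _ φ => size φ + 1
  | ex _ _ φ => size φ + 1
  | nu _ φ => size φ + 1
  | _ => 1

@[simp] theorem size_rename (f : L.Name → L.Name) :
    ∀ φ : NFm L, (φ.rename f).size = φ.size := by
  intro φ; induction φ <;> simp [rename, size, *]

@[simp] theorem size_swap (a b : L.Name) (φ : NFm L) : (φ.swap a b).size = φ.size :=
  size_rename _ φ

@[simp] theorem size_subst :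
    ∀ (φ : NFm L) (θ : ℕ → Tm L), (φ.subst θ).size = φ.size := by
  intro φ; induction φ <;> intro θ <;> simp [subst, size, *]

/-- Free names of a formula. -/
inductive FNa : L.Name → NFm L → Prop
  | atom (a : L.Name) (A : NAtom L) : NAtom.FNa a A → FNa a (atom A)
  | eq₁ (a : L.Name) (t u : Tm L) : Tm.FNa a t → FNa a (eq t u)
  | eq₂ (a : L.Name) (t u : Tm L) : Tm.FNa a u → FNa a (eq t u)
  | frN (a : L.Name) (t : Tm L) : FNa a (fr a t)
  | frT (a c : L.Name) (t : Tm L) : Tm.FNa a t → FNa a (fr c t)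
  | sim₁ (a : L.Name) (t u : Tm L) : Tm.FNa a t → FNa a (sim t u)
  | sim₂ (a : L.Name) (t u : Tm L) : Tm.FNa a u → FNa a (sim t u)
  | imp₁ (a : L.Name) (φ ψ : NFm L) : FNa a φ → FNa a (imp φ ψ)
  | imp₂ (a : L.Name) (φ ψ : NFm L) : FNa a ψ → FNa a (imp φ ψ)
  | and₁ (a : L.Name) (φ ψ : NFm L) : FNa a φ → FNa a (and φ ψ)
  | and₂ (a : L.Name) (φ ψ : NFm L) : FNa a ψ → FNa a (and φ ψ)
  | or₁ (a : L.Name) (φ ψ : NFm L) : FNa a φ → FNa a (or φ ψ)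
  | or₂ (a : L.Name) (φ ψ : NFm L) : FNa a ψ → FNa a (or φ ψ)
  | all (a : L.Name) (X : ℕ) (σ : NomSort L.NSort L.DSort) (φ : NFm L) :
      FNa a φ → FNa a (all X σ φ)
  | ex (a : L.Name) (X : ℕ) (σ : NomSort L.NSort L.DSort) (φ : NFm L) :
      FNa a φ → FNa a (ex X σ φ)
  | nu (a c : L.Name) (φ : NFm L) : a ≠ c → FNa a φ → FNa a (nu c φ)

/-- Free variables of a formula. -/
inductive FVa : ℕ → NFm L → Prop
  | atom (X : ℕ) (A : NAtom L) : NAtom.FVa X A → FVa X (atom A)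
  | eq₁ (X : ℕ) (t u : Tm L) : Tm.FVa X t → FVa X (eq t u)
  | eq₂ (X : ℕ) (t u : Tm L) : Tm.FVa X u → FVa X (eq t u)
  | frT (X : ℕ) (c : L.Name) (t : Tm L) : Tm.FVa X t → FVa X (fr c t)
  | sim₁ (X : ℕ) (t u : Tm L) : Tm.FVa X t → FVa X (sim t u)
  | sim₂ (X : ℕ) (t u : Tm L) : Tm.FVa X u → FVa X (sim t u)
  | imp₁ (X : ℕ) (φ ψ : NFm L) : FVa X φ → FVa X (imp φ ψ)
  | imp₂ (X : ℕ) (φ ψ : NFm L) : FVa X ψ → FVa X (imp φ ψ)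
  | and₁ (X : ℕ) (φ ψ : NFm L) : FVa X φ → FVa X (and φ ψ)
  | and₂ (X : ℕ) (φ ψ : NFm L) : FVa X ψ → FVa X (and φ ψ)
  | or₁ (X : ℕ) (φ ψ : NFm L) : FVa X φ → FVa X (or φ ψ)
  | or₂ (X : ℕ) (φ ψ : NFm L) : FVa X ψ → FVa X (or φ ψ)
  | all (X X' : ℕ) (σ : NomSort L.NSort L.DSort) (φ : NFm L) :
      X ≠ X' → FVa X φ → FVa X (all X' σ φ)
  | ex (X X' : ℕ) (σ : NomSort L.NSort L.DSort) (φ : NFm L) :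
      X ≠ X' → FVa X φ → FVa X (ex X' σ φ)
  | nu (X : ℕ) (c : L.Name) (φ : NFm L) : FVa X φ → FVa X (nu c φ)

end NFm

/-- Satisfaction `S ⊨ φ` of a (closed) formula by a Herbrand interpretation. -/
def FmSat (S : Set (NAtom L)) : NFm L → Prop
  | NFm.tt => True
  | NFm.ff => False
  | NFm.atom A => A ∈ S
  | NFm.eq t u => Aeq t u
  | NFm.fr a t => Fresh a t
  | NFm.sim t u => SimTm t u
  | NFm.imp φ ψ => FmSat S φ → FmSat S ψ
  | NFm.and φ ψ => FmSat S φ ∧ FmSat S ψ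
  | NFm.or φ ψ => FmSat S φ ∨ FmSat S ψ
  | NFm.all X σ φ => ∀ t : Tm L, IsTm t σ → FmSat S (φ.subst (substSingle X t))
  | NFm.ex X σ φ => ∃ t : Tm L, IsTm t σ ∧ FmSat S (φ.subst (substSingle X t))
  | NFm.nu a φ => ∀ b : L.Name, b.1 = a.1 → ¬ NFm.FNa b (NFm.nu a φ) →
      FmSat S (φ.swap b a)
termination_by φ => φ.size
decreasing_by all_goals (simp [NFm.size]; try omega)
/-! ### Herbrand models and the one-step deduction operator -/

/-- A Herbrand model of a set of (closed) program clauses: an equivariant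
subset of the Herbrand base satisfying every clause. -/
def IsHModel (Δ : Set (NCl L)) (H : Set (NAtom L)) : Prop :=
  H ⊆ BL L ∧ EquivariantSet H ∧ ∀ D ∈ Δ, ClSat H D

/-- The one-step deduction operator `T_D`. -/
def TOp : NCl L → Set (NAtom L) → Set (NAtom L)
  | NCl.tt, S => S
  | NCl.atom A, S => S ∪ {A}
  | NCl.and D D', S => TOp D S ∪ TOp D' S
  | NCl.imp G D, S => if GoalSat S G then TOp D S else S
  | NCl.all X σ D, S => ⋃ (t : Tm L) (_ : IsTm t σ), TOp (D.subst (substSingle X t)) S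
  | NCl.nu a D, S =>
      ⋃ (b : L.Name) (_ : b.1 = a.1 ∧ ¬ NCl.FNa b (NCl.nu a D)), TOp (D.swap a b) S
termination_by D _ => D.size
decreasing_by all_goals (simp [NCl.size]; try omega)

/-- The one-step deduction operator `T_Δ` of a (nonempty) program
`Δ = {D₁,…,Dₙ}`, i.e. `T_{D₁ ∧ ⋯ ∧ Dₙ}`. -/
def TProg (Δ : Set (NCl L)) (S : Set (NAtom L)) : Set (NAtom L) :=
  ⋃ D ∈ Δ, TOp D S

/-! ### Contexts, substitutions and constraint entailment -/

/-- Context bindings: variable bindings `X:σ` and name bindings `#a:ν`. -/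
inductive CtxBind (L : NomSig) : Type
  | v (X : ℕ) (σ : NomSort L.NSort L.DSort) : CtxBind L
  | n (a : L.Name) : CtxBind L

/-- Contexts, as lists of bindings with the *most recent binding first*. -/
abbrev Ctxx (L : NomSig) : Type := List (CtxBind L)

/-- The variables declared in a context. -/
def ctxVars : Ctxx L → Set ℕ
  | [] => ∅
  | CtxBind.v X _ :: Ξ => insert X (ctxVars Ξ)
  | CtxBind.n _ :: Ξ => ctxVars Ξ

/-- The names declared in a context. -/
def ctxNames : Ctxx L → Set L.Name
  | [] => ∅
  | CtxBind.v _ _ :: Ξ => ctxNames Ξ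
  | CtxBind.n a :: Ξ => insert a (ctxNames Ξ)

def CtxBind.key : CtxBind L → ℕ ⊕ L.Name
  | v X _ => Sum.inl X
  | n a => Sum.inr a

/-- All bindings of a context are distinct. -/
def CtxWF (Ξ : Ctxx L) : Prop := Ξ.Pairwise (fun b c => b.key ≠ c.key)

/-- `θ : Σ`: the ground substitution `θ` satisfies the context `Σ`. -/
def SubstOk : Ctxx L → (ℕ → Tm L) → Prop
  | [], _ => True
  | CtxBind.v X σ :: Ξ, θ => IsTm (θ X) σ ∧ SubstOk Ξ θ
  | CtxBind.n a :: Ξ, θ => (∀ X ∈ ctxVars Ξ, Fresh a (θ X)) ∧ SubstOk Ξ θ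

/-- `θ` satisfies every constraint in `∇`. -/
def SatAll (θ : ℕ → Tm L) (Φ : Finset (NCon L)) : Prop :=
  ∀ C ∈ Φ, ConSat (C.subst θ)

/-- Constraint entailment `Σ;∇ ⊨ C`. -/
def EntC (Ξ : Ctxx L) (Φ : Finset (NCon L)) (C : NCon L) : Prop :=
  ∀ θ : ℕ → Tm L, SubstOk Ξ θ → SatAll θ Φ → ConSat (C.subst θ)

/-- The free variables and names of a constraint are declared in `Σ`. -/
def ConDecl (Ξ : Ctxx L) (C : NCon L) : Prop :=
  (∀ X, NCon.FVa X C → X ∈ ctxVars Ξ) ∧ (∀ a, NCon.FNa a C → a ∈ ctxNames Ξ)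

/-- The free variables and names of a goal are declared in `Σ`. -/
def GoalDecl (Ξ : Ctxx L) (G : NGoal L) : Prop :=
  (∀ X, NGoal.FVa X G → X ∈ ctxVars Ξ) ∧ (∀ a, NGoal.FNa a G → a ∈ ctxNames Ξ)

/-- The free variables and names of a program clause are declared in `Σ`. -/
def ClDecl (Ξ : Ctxx L) (D : NCl L) : Prop :=
  (∀ X, NCl.FVa X D → X ∈ ctxVars Ξ) ∧ (∀ a, NCl.FNa a D → a ∈ ctxNames Ξ)

/-- The free variables and names of an atom are declared in `Σ`. -/
def AtomDecl (Ξ : Ctxx L) (A : NAtom L) : Prop :=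
  (∀ X, NAtom.FVa X A → X ∈ ctxVars Ξ) ∧ (∀ a, NAtom.FNa a A → a ∈ ctxNames Ξ)

/-! ### Uniform / focused proof search -/

mutual
/-- Uniform derivability `Σ;Δ;∇ ⟶ G`. -/
inductive UD (Δ : Set (NCl L)) : Ctxx L → Finset (NCon L) → NGoal L → Prop
  | top (Ξ : Ctxx L) (Φ : Finset (NCon L)) : UD Δ Ξ Φ NGoal.tt
  | con (Ξ : Ctxx L) (Φ : Finset (NCon L)) (C : NCon L) :
      EntC Ξ Φ C → UD Δ Ξ Φ (NGoal.con C)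
  | andR (Ξ : Ctxx L) (Φ : Finset (NCon L)) (G₁ G₂ : NGoal L) :
      UD Δ Ξ Φ G₁ → UD Δ Ξ Φ G₂ → UD Δ Ξ Φ (NGoal.and G₁ G₂)
  | orR₁ (Ξ : Ctxx L) (Φ : Finset (NCon L)) (G₁ G₂ : NGoal L) :
      UD Δ Ξ Φ G₁ → UD Δ Ξ Φ (NGoal.or G₁ G₂)
  | orR₂ (Ξ : Ctxx L) (Φ : Finset (NCon L)) (G₁ G₂ : NGoal L) :
      UD Δ Ξ Φ G₂ → UD Δ Ξ Φ (NGoal.or G₁ G₂)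
  | exR (Ξ : Ctxx L) (Φ : Finset (NCon L)) (X : ℕ) (σ : NomSort L.NSort L.DSort)
      (C : NCon L) (G : NGoal L) :
      EntC Ξ Φ (NCon.ex X σ C) → UD Δ (CtxBind.v X σ :: Ξ) (insert C Φ) G →
      UD Δ Ξ Φ (NGoal.ex X σ G)
  | nuR (Ξ : Ctxx L) (Φ : Finset (NCon L)) (a : L.Name) (C : NCon L) (G : NGoal L) :
      EntC Ξ Φ (NCon.nu a C) → UD Δ (CtxBind.n a :: Ξ) (insert C Φ) G →
      UD Δ Ξ Φ (NGoal.nu a G)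
  | sel (Ξ : Ctxx L) (Φ : Finset (NCon L)) (D : NCl L) (A : NAtom L) :
      D ∈ Δ → FD Δ Ξ Φ D A → UD Δ Ξ Φ (NGoal.atom A)

/-- Focused derivability `Σ;Δ;∇ ⟶ [D] ⇒ A`. -/
inductive FD (Δ : Set (NCl L)) : Ctxx L → Finset (NCon L) → NCl L → NAtom L → Prop
  | hyp (Ξ : Ctxx L) (Φ : Finset (NCon L)) (A' A : NAtom L) :
      EntC Ξ Φ (NCon.simA A' A) → FD Δ Ξ Φ (NCl.atom A') A
  | andL₁ (Ξ : Ctxx L) (Φ : Finset (NCon L)) (D₁ D₂ : NCl L) (A : NAtom L) :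
      FD Δ Ξ Φ D₁ A → FD Δ Ξ Φ (NCl.and D₁ D₂) A
  | andL₂ (Ξ : Ctxx L) (Φ : Finset (NCon L)) (D₁ D₂ : NCl L) (A : NAtom L) :
      FD Δ Ξ Φ D₂ A → FD Δ Ξ Φ (NCl.and D₁ D₂) A
  | impL (Ξ : Ctxx L) (Φ : Finset (NCon L)) (G : NGoal L) (D : NCl L) (A : NAtom L) :
      FD Δ Ξ Φ D A → UD Δ Ξ Φ G → FD Δ Ξ Φ (NCl.imp G D) A
  | allL (Ξ : Ctxx L) (Φ : Finset (NCon L)) (X : ℕ) (σ : NomSort L.NSort L.DSort)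
      (C : NCon L) (D : NCl L) (A : NAtom L) :
      EntC Ξ Φ (NCon.ex X σ C) → FD Δ (CtxBind.v X σ :: Ξ) (insert C Φ) D A →
      FD Δ Ξ Φ (NCl.all X σ D) A
  | nuL (Ξ : Ctxx L) (Φ : Finset (NCon L)) (a : L.Name) (C : NCon L) (D : NCl L)
      (A : NAtom L) :
      EntC Ξ Φ (NCon.nu a C) → FD Δ (CtxBind.n a :: Ξ) (insert C Φ) D A →
      FD Δ Ξ Φ (NCl.nu a D) A
end

mutual
/-- Uniform derivability for ≈-resolution, `Σ;Δ;∇ ⟶≈ G`. -/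
inductive UDe (Δ : Set (NCl L)) : Ctxx L → Finset (NCon L) → NGoal L → Prop
  | top (Ξ : Ctxx L) (Φ : Finset (NCon L)) : UDe Δ Ξ Φ NGoal.tt
  | con (Ξ : Ctxx L) (Φ : Finset (NCon L)) (C : NCon L) :
      EntC Ξ Φ C → UDe Δ Ξ Φ (NGoal.con C)
  | andR (Ξ : Ctxx L) (Φ : Finset (NCon L)) (G₁ G₂ : NGoal L) :
      UDe Δ Ξ Φ G₁ → UDe Δ Ξ Φ G₂ → UDe Δ Ξ Φ (NGoal.and G₁ G₂)
  | orR₁ (Ξ : Ctxx L) (Φ : Finset (NCon L)) (G₁ G₂ : NGoal L) :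
      UDe Δ Ξ Φ G₁ → UDe Δ Ξ Φ (NGoal.or G₁ G₂)
  | orR₂ (Ξ : Ctxx L) (Φ : Finset (NCon L)) (G₁ G₂ : NGoal L) :
      UDe Δ Ξ Φ G₂ → UDe Δ Ξ Φ (NGoal.or G₁ G₂)
  | exR (Ξ : Ctxx L) (Φ : Finset (NCon L)) (X : ℕ) (σ : NomSort L.NSort L.DSort)
      (C : NCon L) (G : NGoal L) :
      EntC Ξ Φ (NCon.ex X σ C) → UDe Δ (CtxBind.v X σ :: Ξ) (insert C Φ) G →
      UDe Δ Ξ Φ (NGoal.ex X σ G)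
  | nuR (Ξ : Ctxx L) (Φ : Finset (NCon L)) (a : L.Name) (C : NCon L) (G : NGoal L) :
      EntC Ξ Φ (NCon.nu a C) → UDe Δ (CtxBind.n a :: Ξ) (insert C Φ) G →
      UDe Δ Ξ Φ (NGoal.nu a G)
  | sel (Ξ : Ctxx L) (Φ : Finset (NCon L)) (D : NCl L) (A : NAtom L) :
      D ∈ Δ → FDe Δ Ξ Φ D A → UDe Δ Ξ Φ (NGoal.atom A)

/-- Focused derivability for ≈-resolution, `Σ;Δ;∇ ⟶≈ [D] ⇒ A`. -/
inductive FDe (Δ : Set (NCl L)) : Ctxx L → Finset (NCon L) → NCl L → NAtom L → Prop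
  | hyp (Ξ : Ctxx L) (Φ : Finset (NCon L)) (A' A : NAtom L) :
      EntC Ξ Φ (NCon.aeqA A' A) → FDe Δ Ξ Φ (NCl.atom A') A
  | andL₁ (Ξ : Ctxx L) (Φ : Finset (NCon L)) (D₁ D₂ : NCl L) (A : NAtom L) :
      FDe Δ Ξ Φ D₁ A → FDe Δ Ξ Φ (NCl.and D₁ D₂) A
  | andL₂ (Ξ : Ctxx L) (Φ : Finset (NCon L)) (D₁ D₂ : NCl L) (A : NAtom L) :
      FDe Δ Ξ Φ D₂ A → FDe Δ Ξ Φ (NCl.and D₁ D₂) A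
  | impL (Ξ : Ctxx L) (Φ : Finset (NCon L)) (G : NGoal L) (D : NCl L) (A : NAtom L) :
      FDe Δ Ξ Φ D A → UDe Δ Ξ Φ G → FDe Δ Ξ Φ (NCl.imp G D) A
  | allL (Ξ : Ctxx L) (Φ : Finset (NCon L)) (X : ℕ) (σ : NomSort L.NSort L.DSort)
      (C : NCon L) (D : NCl L) (A : NAtom L) :
      EntC Ξ Φ (NCon.ex X σ C) → FDe Δ (CtxBind.v X σ :: Ξ) (insert C Φ) D A →
      FDe Δ Ξ Φ (NCl.all X σ D) A
  | nuL (Ξ : Ctxx L) (Φ : Finset (NCon L)) (a : L.Name) (C : NCon L) (D : NCl L)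
      (A : NAtom L) :
      EntC Ξ Φ (NCon.nu a C) → FDe Δ (CtxBind.n a :: Ξ) (insert C Φ) D A →
      FDe Δ Ξ Φ (NCl.nu a D) A
end

/-! ### Residuated proof search -/

mutual
/-- Residuated uniform derivability `Σ;Δ ⟶ G ↘ C`. -/
inductive RG (Δ : Set (NCl L)) : Ctxx L → NGoal L → NCon L → Prop
  | con (Ξ : Ctxx L) (C : NCon L) : RG Δ Ξ (NGoal.con C) C
  | top (Ξ : Ctxx L) : RG Δ Ξ NGoal.tt NCon.tt
  | andR (Ξ : Ctxx L) (G₁ G₂ : NGoal L) (C₁ C₂ : NCon L) :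
      RG Δ Ξ G₁ C₁ → RG Δ Ξ G₂ C₂ → RG Δ Ξ (NGoal.and G₁ G₂) (NCon.and C₁ C₂)
  | orR₁ (Ξ : Ctxx L) (G₁ G₂ : NGoal L) (C : NCon L) :
      RG Δ Ξ G₁ C → RG Δ Ξ (NGoal.or G₁ G₂) C
  | orR₂ (Ξ : Ctxx L) (G₁ G₂ : NGoal L) (C : NCon L) :
      RG Δ Ξ G₂ C → RG Δ Ξ (NGoal.or G₁ G₂) C
  | exR (Ξ : Ctxx L) (X : ℕ) (σ : NomSort L.NSort L.DSort) (G : NGoal L) (C : NCon L) :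
      RG Δ (CtxBind.v X σ :: Ξ) G C → RG Δ Ξ (NGoal.ex X σ G) (NCon.ex X σ C)
  | nuR (Ξ : Ctxx L) (a : L.Name) (G : NGoal L) (C : NCon L) :
      RG Δ (CtxBind.n a :: Ξ) G C → RG Δ Ξ (NGoal.nu a G) (NCon.nu a C)
  | back (Ξ : Ctxx L) (A : NAtom L) (D : NCl L) (G : NGoal L) (C : NCon L) :
      D ∈ Δ → RF Δ Ξ D A G → RG Δ Ξ G C → RG Δ Ξ (NGoal.atom A) C

/-- Residuated focused derivability `Σ;Δ ⟶ [D] ⇒ A ↘ G`. -/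
inductive RF (Δ : Set (NCl L)) : Ctxx L → NCl L → NAtom L → NGoal L → Prop
  | hyp (Ξ : Ctxx L) (A' A : NAtom L) :
      RF Δ Ξ (NCl.atom A') A (NGoal.con (NCon.simA A A'))
  | andL₁ (Ξ : Ctxx L) (D₁ D₂ : NCl L) (A : NAtom L) (G : NGoal L) :
      RF Δ Ξ D₁ A G → RF Δ Ξ (NCl.and D₁ D₂) A G
  | andL₂ (Ξ : Ctxx L) (D₁ D₂ : NCl L) (A : NAtom L) (G : NGoal L) :
      RF Δ Ξ D₂ A G → RF Δ Ξ (NCl.and D₁ D₂) A G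
  | impL (Ξ : Ctxx L) (G : NGoal L) (D : NCl L) (A : NAtom L) (G' : NGoal L) :
      RF Δ Ξ D A G' → RF Δ Ξ (NCl.imp G D) A (NGoal.and G G')
  | allL (Ξ : Ctxx L) (X : ℕ) (σ : NomSort L.NSort L.DSort) (D : NCl L) (A : NAtom L)
      (G : NGoal L) :
      RF Δ (CtxBind.v X σ :: Ξ) D A G → RF Δ Ξ (NCl.all X σ D) A (NGoal.ex X σ G)
  | nuL (Ξ : Ctxx L) (a : L.Name) (D : NCl L) (A : NAtom L) (G : NGoal L) :
      RF Δ (CtxBind.n a :: Ξ) D A G → RF Δ Ξ (NCl.nu a D) A (NGoal.nu a G)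
end

/-! ### Operational semantics -/

/-- Operational states `⟨Σ; Γ; ∇⟩`. -/
structure OState (L : NomSig) : Type where
  ctx : Ctxx L
  goals : List (NGoal L)
  cons : Finset (NCon L)

/-- The operational transition relation relative to a program `Δ`. -/
inductive OStep (Δ : Set (NCl L)) : OState L → OState L → Prop
  | back (Ξ : Ctxx L) (Φ : Finset (NCon L)) (Γ : List (NGoal L)) (D : NCl L)
      (A : NAtom L) (G : NGoal L) :
      D ∈ Δ → RF Δ Ξ D A G →
      OStep Δ ⟨Ξ, NGoal.atom A :: Γ, Φ⟩ ⟨Ξ, G :: Γ, Φ⟩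
  | con (Ξ : Ctxx L) (Φ : Finset (NCon L)) (Γ : List (NGoal L)) (C : NCon L) :
      (∃ θ : ℕ → Tm L, SubstOk Ξ θ ∧ SatAll θ (insert C Φ)) →
      OStep Δ ⟨Ξ, NGoal.con C :: Γ, Φ⟩ ⟨Ξ, Γ, insert C Φ⟩
  | top (Ξ : Ctxx L) (Φ : Finset (NCon L)) (Γ : List (NGoal L)) :
      OStep Δ ⟨Ξ, NGoal.tt :: Γ, Φ⟩ ⟨Ξ, Γ, Φ⟩
  | and (Ξ : Ctxx L) (Φ : Finset (NCon L)) (Γ : List (NGoal L)) (G₁ G₂ : NGoal L) :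
      OStep Δ ⟨Ξ, NGoal.and G₁ G₂ :: Γ, Φ⟩ ⟨Ξ, G₁ :: G₂ :: Γ, Φ⟩
  | or₁ (Ξ : Ctxx L) (Φ : Finset (NCon L)) (Γ : List (NGoal L)) (G₁ G₂ : NGoal L) :
      OStep Δ ⟨Ξ, NGoal.or G₁ G₂ :: Γ, Φ⟩ ⟨Ξ, G₁ :: Γ, Φ⟩
  | or₂ (Ξ : Ctxx L) (Φ : Finset (NCon L)) (Γ : List (NGoal L)) (G₁ G₂ : NGoal L) :
      OStep Δ ⟨Ξ, NGoal.or G₁ G₂ :: Γ, Φ⟩ ⟨Ξ, G₂ :: Γ, Φ⟩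
  | ex (Ξ : Ctxx L) (Φ : Finset (NCon L)) (Γ : List (NGoal L)) (X : ℕ)
      (σ : NomSort L.NSort L.DSort) (G : NGoal L) :
      OStep Δ ⟨Ξ, NGoal.ex X σ G :: Γ, Φ⟩ ⟨CtxBind.v X σ :: Ξ, G :: Γ, Φ⟩
  | nu (Ξ : Ctxx L) (Φ : Finset (NCon L)) (Γ : List (NGoal L)) (a : L.Name)
      (G : NGoal L) :
      OStep Δ ⟨Ξ, NGoal.nu a G :: Γ, Φ⟩ ⟨CtxBind.n a :: Ξ, G :: Γ, Φ⟩

/-- `∃Σ[C]`: close a constraint by quantifying over all bindings of a context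
(innermost quantifier for the most recent binding). -/
def exCtx : Ctxx L → NCon L → NCon L
  | [], C => C
  | CtxBind.v X σ :: Ξ, C => exCtx Ξ (NCon.ex X σ C)
  | CtxBind.n a :: Ξ, C => exCtx Ξ (NCon.nu a C)

/-- The conjunction of a finite set of constraints. -/
def bigAnd (Φ : Finset (NCon L)) : NCon L := Φ.toList.foldr NCon.and NCon.tt
/-! ### Symmetry of the similarity constraint -/

namespace Resid

theorem rename_app (f : L.Name → L.Name) (g : L.Func) (ts : List (Tm L)) :
    (Tm.app g ts).rename f = Tm.app g (ts.map (Tm.rename f)) := by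
  rw [Tm.rename]; simp

theorem rename_rename (f g : L.Name → L.Name) :
    ∀ t : Tm L, (t.rename f).rename g = t.rename (g ∘ f)
  | .var X => by simp [Tm.rename]
  | .name c => by simp [Tm.rename]
  | .app h ts => by
      simp only [rename_app, List.map_map, Tm.app.injEq, true_and]
      apply List.map_congr_left
      intro t ht
      exact rename_rename f g t
  | .abs c t => by
      simp only [Tm.rename, Function.comp_apply, rename_rename f g t]
decreasing_by
  all_goals simp_wf
  all_goals first
    | (have := List.sizeOf_lt_of_mem ht; omega)
    | omega

theorem rename_id : ∀ t : Tm L, t.rename id = t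
  | .var X => by simp [Tm.rename]
  | .name c => by simp [Tm.rename]
  | .app h ts => by
      simp only [rename_app, Tm.app.injEq, true_and]
      conv_rhs => rw [← List.map_id ts]
      apply List.map_congr_left
      intro t ht
      exact rename_id t
  | .abs c t => by
      simp only [Tm.rename, id, rename_id t]
decreasing_by
  all_goals simp_wf
  all_goals first
    | (have := List.sizeOf_lt_of_mem ht; omega)
    | omega

theorem swapName_comm (a b : L.Name) : swapName a b = swapName b a := by
  funext c; unfold swapName; split_ifs <;> simp_all

theorem swapName_invol (a b : L.Name) : swapName a b ∘ swapName a b = id := by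
  funext c; simp only [swapName, Function.comp, id]; split_ifs <;> simp_all

theorem swapName_inj (a b : L.Name) : Function.Injective (swapName a b) :=
  Function.LeftInverse.injective (g := swapName a b) (congrFun (swapName_invol a b))

theorem swap_swap (a b : L.Name) (t : Tm L) : (t.swap a b).swap a b = t := by
  rw [Tm.swap, Tm.swap, rename_rename, swapName_invol, rename_id]

/-- Conjugation of a transposition by an injective renaming. -/
theorem rename_swap {f : L.Name → L.Name} (hf : Function.Injective f) (a b : L.Name)
    (t : Tm L) : (t.swap a b).rename f = (t.rename f).swap (f a) (f b) := by
  rw [Tm.swap, Tm.swap, rename_rename, rename_rename]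
  congr 1
  funext c
  simp only [Function.comp, swapName, hf.eq_iff]
  split_ifs <;> rfl

theorem fresh_rename {f : L.Name → L.Name} (hf : Function.Injective f) {a : L.Name}
    {t : Tm L} (h : Fresh a t) : Fresh (f a) (t.rename f) := by
  induction h with
  | name b hab => rw [Tm.rename]; exact .name _ _ (hf.ne hab)
  | app g ts _ ih =>
      rw [rename_app]
      refine .app _ _ _ fun t ht => ?_
      obtain ⟨s, hs, rfl⟩ := List.mem_map.1 ht
      exact ih s hs
  | absSame t => rw [Tm.rename]; exact .absSame _ _
  | absDiff b t hab _ ih => rw [Tm.rename]; exact .absDiff _ _ _ (hf.ne hab) ih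

theorem fresh_swap_iff (a b c : L.Name) (t : Tm L) :
    Fresh c (t.swap a b) ↔ Fresh (swapName a b c) t := by
  constructor
  · intro h
    have := fresh_rename (swapName_inj a b) h
    rwa [← Tm.swap, swap_swap] at this
  · intro h
    have := fresh_rename (swapName_inj a b) h
    rwa [← Function.comp_apply (f := swapName a b), swapName_invol] at this

theorem fresh_abs_iff (a b : L.Name) (t : Tm L) :
    Fresh a (Tm.abs b t) ↔ a = b ∨ Fresh a t := by
  constructor
  · intro h
    cases h with
    | absSame => exact .inl rfl
    | absDiff _ _ _ h => exact .inr h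
  · intro h
    by_cases hab : a = b
    · subst hab; exact .absSame _ _
    · exact .absDiff _ _ _ hab (h.resolve_left hab)

/-- Any injective renaming, finite and sort-preserving or not, respects `≈`. -/
theorem aeq_rename {f : L.Name → L.Name} (hf : Function.Injective f) {t u : Tm L}
    (h : Aeq t u) : Aeq (t.rename f) (u.rename f) := by
  induction h with
  | name a => rw [Tm.rename]; exact .name _
  | app g ts us hl _ ih =>
      rw [rename_app, rename_app]
      refine .app _ _ _ (by simpa using hl) fun p hp => ?_
      rw [List.zip_map] at hp
      obtain ⟨q, hq, rfl⟩ := List.mem_map.1 hp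
      exact ih q hq
  | absSame a t u _ ih => rw [Tm.rename, Tm.rename]; exact .absSame _ _ _ ih
  | absDiff a b t u hfr _ ih =>
      rw [Tm.rename, Tm.rename]
      refine .absDiff _ _ _ _ (fresh_rename hf hfr) ?_
      rwa [rename_swap hf] at ih

theorem zip_left {α β : Type*} : ∀ {l : List α} {m : List β}, l.length = m.length →
    ∀ x ∈ l, ∃ y, (x, y) ∈ l.zip m
  | [], _, _, x, hx => by simp at hx
  | _ :: _, [], h, _, _ => by simp at h
  | a :: l, b :: m, h, x, hx => by
      rcases List.mem_cons.1 hx with rfl | hx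
      · exact ⟨b, by simp⟩
      · obtain ⟨y, hy⟩ := zip_left (by simpa using h) x hx
        exact ⟨y, by simp [hy]⟩

theorem zip_symm {α β : Type*} : ∀ {l : List α} {m : List β} {p : β × α},
    p ∈ m.zip l → (p.2, p.1) ∈ l.zip m
  | [], _, p, h => by simp at h
  | _ :: _, [], _, h => by simp at h
  | a :: l, b :: m, p, h => by
      rcases List.mem_cons.1 h with rfl | h
      · simp
      · exact List.mem_cons_of_mem _ (zip_symm h)

theorem zip_right {α β : Type*} {l : List α} {m : List β} (h : l.length = m.length)
    (y : β) (hy : y ∈ m) : ∃ x, (x, y) ∈ l.zip m := by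
  obtain ⟨x, hx⟩ := zip_left h.symm y hy
  exact ⟨x, zip_symm hx⟩

theorem fresh_app_iff (a : L.Name) (f : L.Func) (ts : List (Tm L)) :
    Fresh a (Tm.app f ts) ↔ ∀ t ∈ ts, Fresh a t :=
  ⟨fun h => by cases h; assumption, .app _ _ _⟩

theorem aeq_fresh_iff {t u : Tm L} (h : Aeq t u) : ∀ c, Fresh c t ↔ Fresh c u := by
  induction h with
  | name a => exact fun c => Iff.rfl
  | app g ts us hl _ ih =>
      intro c
      rw [fresh_app_iff, fresh_app_iff]
      constructor
      · intro h u hu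
        obtain ⟨t, ht⟩ := zip_right hl u hu
        exact (ih _ ht c).1 (h t (List.of_mem_zip ht).1)
      · intro h t ht
        obtain ⟨u, hu⟩ := zip_left hl t ht
        exact (ih _ hu c).2 (h u (List.of_mem_zip hu).2)
  | absSame a t u _ ih => intro c; rw [fresh_abs_iff, fresh_abs_iff, ih]
  | absDiff a b t u hfr _ ih =>
      intro c
      rw [fresh_abs_iff, fresh_abs_iff, ih, fresh_swap_iff]
      unfold swapName
      split_ifs with h₁ h₂
      · subst h₁; simp [hfr]
      · subst h₂; simp [hfr]
      · simp [h₁, h₂]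

theorem aeq_symm {t u : Tm L} (h : Aeq t u) : Aeq u t := by
  induction h with
  | name a => exact .name a
  | app g ts us hl _ ih => exact .app _ _ _ hl.symm fun p hp => ih _ (zip_symm hp)
  | absSame a t u _ ih => exact .absSame _ _ _ ih
  | absDiff a b t u hfr htu ih =>
      -- `b # (a b)·u` because `a # u`, and freshness transfers along `t ≈ (a b)·u`.
      refine .absDiff _ _ _ _ ?_ ?_
      · rw [aeq_fresh_iff htu, fresh_swap_iff]
        have hb : swapName a b b = a := by
          unfold swapName; split_ifs <;> simp_all
        rwa [hb]
      · have := aeq_rename (swapName_inj a b) ih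
        rw [← Tm.swap, swap_swap, swapName_comm] at this
        exact this

theorem atomSim_symm {A B : NAtom L} : AtomSim A B → AtomSim B A := by
  rintro ⟨π, ⟨hbij, hsort, hfin⟩, hrel, hlen, hargs⟩
  obtain ⟨ρ, hl, hr⟩ := Function.bijective_iff_has_inverse.1 hbij
  refine ⟨ρ, ⟨⟨hr.injective, hl.surjective⟩, fun a => ?_, hfin.subset fun a ha => ?_⟩, hrel.symm,
    ?_, fun p hp => ?_⟩
  · rw [← hsort (ρ a), hr a]
  · intro h
    refine ha ?_
    conv_lhs => rw [← h]
    exact hl a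
  · simpa [NAtom.rename] using hlen.symm
  · simp only [NAtom.rename, List.zip_map_left] at hp
    obtain ⟨⟨b, a⟩, hq, rfl⟩ := List.mem_map.1 hp
    have hab : Aeq (a.rename π) b := by
      refine hargs (a.rename π, b) ?_
      simp only [NAtom.rename, List.zip_map_left]
      exact List.mem_map.2 ⟨(a, b), zip_symm hq, rfl⟩
    have := aeq_rename hr.injective (aeq_symm hab)
    rw [rename_rename, hl.comp_eq_id, rename_id] at this
    exact this

/-! ### Strengthening the constraint set -/

/-- `Ψ` is at least as strong as `Φ` over the context `Ξ`. -/
def Stronger (Ξ : Ctxx L) (Ψ Φ : Finset (NCon L)) : Prop :=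
  ∀ θ, SubstOk Ξ θ → SatAll θ Ψ → SatAll θ Φ

theorem Stronger.ent {Ξ : Ctxx L} {Ψ Φ : Finset (NCon L)} (h : Stronger Ξ Ψ Φ) {C : NCon L}
    (hC : EntC Ξ Φ C) : EntC Ξ Ψ C :=
  fun θ hθ hs => hC θ hθ (h θ hθ hs)

theorem Stronger.insert {Ξ : Ctxx L} {Ψ Φ : Finset (NCon L)} (h : Stronger Ξ Ψ Φ)
    (b : CtxBind L) (C : NCon L) : Stronger (b :: Ξ) (insert C Ψ) (insert C Φ) := by
  intro θ hθ hs D hD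
  have hθ' : SubstOk Ξ θ := by cases b <;> exact hθ.2
  rcases Finset.mem_insert.1 hD with rfl | hD
  · exact hs D (Finset.mem_insert_self _ _)
  · exact h θ hθ' (fun E hE => hs E (Finset.mem_insert_of_mem hE)) D hD

theorem stronger_of_subset {Ξ : Ctxx L} {Ψ Φ : Finset (NCon L)} (h : Φ ⊆ Ψ) :
    Stronger Ξ Ψ Φ :=
  fun _ _ hs C hC => hs C (h hC)

mutual
/-- Uniform derivability is preserved when the constraint set is replaced by a
semantically stronger one. -/
theorem ud_mono {Δ : Set (NCl L)} {Ξ : Ctxx L} {Φ : Finset (NCon L)} {G : NGoal L} :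
    UD Δ Ξ Φ G → ∀ Ψ, Stronger Ξ Ψ Φ → UD Δ Ξ Ψ G
  | .top _ _, _, _ => .top _ _
  | .con _ _ _ h, _, hs => .con _ _ _ (hs.ent h)
  | .andR _ _ _ _ h₁ h₂, Ψ, hs => .andR _ _ _ _ (ud_mono h₁ Ψ hs) (ud_mono h₂ Ψ hs)
  | .orR₁ _ _ _ _ h, Ψ, hs => .orR₁ _ _ _ _ (ud_mono h Ψ hs)
  | .orR₂ _ _ _ _ h, Ψ, hs => .orR₂ _ _ _ _ (ud_mono h Ψ hs)
  | .exR _ _ _ _ C _ hC h, _, hs =>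
      .exR _ _ _ _ C _ (hs.ent hC) (ud_mono h _ (hs.insert _ C))
  | .nuR _ _ _ C _ hC h, _, hs =>
      .nuR _ _ _ C _ (hs.ent hC) (ud_mono h _ (hs.insert _ C))
  | .sel _ _ D _ hD h, Ψ, hs => .sel _ _ D _ hD (fd_mono h Ψ hs)

theorem fd_mono {Δ : Set (NCl L)} {Ξ : Ctxx L} {Φ : Finset (NCon L)} {D : NCl L}
    {A : NAtom L} : FD Δ Ξ Φ D A → ∀ Ψ, Stronger Ξ Ψ Φ → FD Δ Ξ Ψ D A
  | .hyp _ _ _ _ h, _, hs => .hyp _ _ _ _ (hs.ent h)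
  | .andL₁ _ _ _ _ _ h, Ψ, hs => .andL₁ _ _ _ _ _ (fd_mono h Ψ hs)
  | .andL₂ _ _ _ _ _ h, Ψ, hs => .andL₂ _ _ _ _ _ (fd_mono h Ψ hs)
  | .impL _ _ _ _ _ h g, Ψ, hs => .impL _ _ _ _ _ (fd_mono h Ψ hs) (ud_mono g Ψ hs)
  | .allL _ _ _ _ C _ _ hC h, _, hs =>
      .allL _ _ _ _ C _ _ (hs.ent hC) (fd_mono h _ (hs.insert _ C))
  | .nuL _ _ _ C _ _ hC h, _, hs =>
      .nuL _ _ _ C _ _ (hs.ent hC) (fd_mono h _ (hs.insert _ C))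
end

/-! ### Soundness of the residuated system -/

/-- The residual goal `G` mirrors the clause `D`, so each left rule is rebuilt from
the inversion of the right rule deriving `G`. -/
theorem rf_sound {Δ : Set (NCl L)} {Ξ : Ctxx L} {D : NCl L} {A : NAtom L} {G : NGoal L} :
    RF Δ Ξ D A G → ∀ Φ, UD Δ Ξ Φ G → FD Δ Ξ Φ D A
  | .hyp _ A' A, Φ, hG => by
      cases hG with
      | con _ _ _ h =>
        refine .hyp _ _ _ _ fun θ hθ hs => ?_
        have := h θ hθ hs
        simp only [NCon.subst, ConSat] at this ⊢
        exact atomSim_symm this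
  | .andL₁ _ _ _ _ _ h, Φ, hG => .andL₁ _ _ _ _ _ (rf_sound h Φ hG)
  | .andL₂ _ _ _ _ _ h, Φ, hG => .andL₂ _ _ _ _ _ (rf_sound h Φ hG)
  | .impL _ _ _ _ _ h, Φ, hG => by
      cases hG with
      | andR _ _ _ _ h₁ h₂ => exact .impL _ _ _ _ _ (rf_sound h Φ h₂) h₁
  | .allL _ _ _ _ _ _ h, Φ, hG => by
      cases hG with
      | exR _ _ _ _ C _ hC hG => exact .allL _ _ _ _ C _ _ hC (rf_sound h _ hG)
  | .nuL _ _ _ _ _ h, Φ, hG => by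
      cases hG with
      | nuR _ _ _ C _ hC hG => exact .nuL _ _ _ C _ _ hC (rf_sound h _ hG)

theorem ent_self (Ξ : Ctxx L) (C : NCon L) : EntC Ξ {C} C :=
  fun _ _ hs => hs C (Finset.mem_singleton_self C)

theorem stronger_and₁ (Ξ : Ctxx L) (C₁ C₂ : NCon L) : Stronger Ξ {NCon.and C₁ C₂} {C₁} := by
  intro θ hθ hs D hD
  rw [Finset.mem_singleton.1 hD]
  have := ent_self Ξ _ θ hθ hs
  simp only [NCon.subst, ConSat] at this
  exact this.1

theorem stronger_and₂ (Ξ : Ctxx L) (C₁ C₂ : NCon L) : Stronger Ξ {NCon.and C₁ C₂} {C₂} := by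
  intro θ hθ hs D hD
  rw [Finset.mem_singleton.1 hD]
  have := ent_self Ξ _ θ hθ hs
  simp only [NCon.subst, ConSat] at this
  exact this.2

theorem rg_sound {Δ : Set (NCl L)} {Ξ : Ctxx L} {G : NGoal L} {C : NCon L} :
    RG Δ Ξ G C → UD Δ Ξ {C} G
  | .con _ _ => .con _ _ _ (ent_self _ _)
  | .top _ => .top _ _
  | .andR _ _ _ _ _ h₁ h₂ =>
      .andR _ _ _ _ (ud_mono (rg_sound h₁) _ (stronger_and₁ _ _ _))
        (ud_mono (rg_sound h₂) _ (stronger_and₂ _ _ _))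
  | .orR₁ _ _ _ _ h => .orR₁ _ _ _ _ (rg_sound h)
  | .orR₂ _ _ _ _ h => .orR₂ _ _ _ _ (rg_sound h)
  -- In the quantifier cases the residual body itself is the interpolated constraint.
  | .exR _ _ _ _ C h =>
      .exR _ _ _ _ C _ (ent_self _ _) (ud_mono (rg_sound h) _ (stronger_of_subset (by simp)))
  | .nuR _ _ _ C h =>
      .nuR _ _ _ C _ (ent_self _ _) (ud_mono (rg_sound h) _ (stronger_of_subset (by simp)))
  | .back _ _ D _ _ hD hF hG => .sel _ _ D _ hD (rf_sound hF _ (rg_sound hG))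

end Resid

/-! **Statement 13.**  Residuated soundness. -/
theorem stmt13 (L : NomSig)
    (hinhab : ∀ σ : NomSort L.NSort L.DSort, ∃ t : Tm L, IsTm t σ)
    (Δ : Set (NCl L)) (hfin : Δ.Finite) (hclv : ∀ D ∈ Δ, NCl.ClosedV D) :
    (∀ (Ξ : Ctxx L) (G : NGoal L) (C : NCon L), CtxWF Ξ →
      RG Δ Ξ G C → UD Δ Ξ {C} G) ∧
    (∀ (Ξ : Ctxx L) (Φ : Finset (NCon L)) (G : NGoal L) (D : NCl L) (A : NAtom L),
      CtxWF Ξ → UD Δ Ξ Φ G → RF Δ Ξ D A G → FD Δ Ξ Φ D A) := by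
  exact ⟨fun Ξ G C _ h => Resid.rg_sound h,
    fun Ξ Φ G D A _ hG hF => Resid.rf_sound hF Φ hG⟩

end
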